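/- Fix n ≥ 1 and let P = ℝⁿ × ℝⁿ. Let U ⊆ P be an open set such that every (x,v) ∈ U has v ≠ 0 and satisfies (x, λv) ∈ U for all λ > 0. Let ψ : P → ℝⁿ be differentiable on U, and define X(x,v) = (v, ψ(x,v)) and R(x,v) = (0,v). The following are equivalent: (i) there exists φ : P → ℝⁿ, differentiable on U, with φ(x,λv) = λ²·φ(x,v) for all (x,v) ∈ U and λ > 0, and vᵢ·φⱼ(x,v) − vⱼ·φᵢ(x,v) = vᵢ·ψⱼ(x,v) − vⱼ·ψᵢ(x,v) for all (x,v) ∈ U and all i, j; (ii) there exist functions a, b : P → ℝ with [R,X](p) = a(p)•R(p) + b(p)•X(p) for all p ∈ U. (Equivalence (i) ⟺ (ii) of the Vlasov Bivector Theorem, in coordinates: the horizontal bivector Ψ = R∧X admits a Vlasov representation if and only if it is integrable.) -/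

import Mathlib

open VectorField

/-- Euler homogeneity on a ray: a function whose logarithmic derivative is that of `l ^ k`
on `(0, ∞)` is a multiple of `l ^ k`. -/
lemma eq_pow_mul_of_euler (k : ℕ) {h h' : ℝ → ℝ}
    (hd : ∀ l : ℝ, 0 < l → HasDerivAt h (h' l) l)
    (he : ∀ l : ℝ, 0 < l → l * h' l = k * h l) {l : ℝ} (hl : 0 < l) :
    h l = l ^ k * h 1 := by
  have hg : ∀ t ∈ Set.Ioi (0 : ℝ), HasDerivAt (fun t => h t / t ^ k) 0 t := by
    intro t ht
    have ht : 0 < t := ht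
    refine ((hd t ht).div (hasDerivAt_pow k t) (pow_pos ht k).ne').congr_deriv ?_
    have key : h' t * t ^ k - h t * (k * t ^ (k - 1)) = 0 := by
      rcases k with _ | m
      · have := he t ht
        simp only [Nat.cast_zero, zero_mul, mul_eq_zero, ht.ne', false_or] at this
        simp [this]
      · rw [Nat.add_sub_cancel]
        linear_combination t ^ m * he t ht
    rw [key, zero_div]
  have hc := isOpen_Ioi.is_const_of_deriv_eq_zero (convex_Ioi (0 : ℝ)).isPreconnected
    (fun t ht => (hg t ht).differentiableAt.differentiableWithinAt)
    (fun t ht => (hg t ht).deriv) (Set.mem_Ioi.2 hl) (Set.mem_Ioi.2 one_pos)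
  simp only [one_pow, div_one] at hc
  rw [div_eq_iff (pow_pos hl k).ne'] at hc
  rw [hc, mul_comm]

/-- A vector whose exterior product with a nonzero vector vanishes is a multiple of it. -/
lemma exists_eq_smul_of_wedge_eq_zero {ι K : Type*} [Field K] {u v : ι → K} (hv : v ≠ 0)
    (h : ∀ i j, v i * u j = v j * u i) : ∃ a : K, u = a • v := by
  obtain ⟨i, hi⟩ := Function.ne_iff.1 hv
  have hi : v i ≠ 0 := hi
  refine ⟨u i / v i, funext fun j => ?_⟩
  rw [Pi.smul_apply, smul_eq_mul, div_mul_eq_mul_div, eq_div_iff hi]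
  linear_combination h i j

/-- The bracket of the radial field with a horizontal field. -/
lemma lieBracket_radial_horizontal {E : Type*} [NormedAddCommGroup E] [NormedSpace ℝ E]
    {ψ : E × E → E} {p : E × E} (hψ : DifferentiableAt ℝ ψ p) :
    lieBracket ℝ (fun q : E × E => ((0 : E), q.2)) (fun q => (q.2, ψ q)) p =
      (p.2, fderiv ℝ ψ p (0, p.2) - ψ p) := by
  have hX : HasFDerivAt (fun q : E × E => (q.2, ψ q))
      ((ContinuousLinearMap.snd ℝ E E).prod (fderiv ℝ ψ p)) p :=
    hasFDerivAt_snd.prodMk hψ.hasFDerivAt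
  have hR : HasFDerivAt (fun q : E × E => ((0 : E), q.2))
      ((0 : E × E →L[ℝ] E).prod (ContinuousLinearMap.snd ℝ E E)) p :=
    (hasFDerivAt_const (0 : E) p).prodMk hasFDerivAt_snd
  rw [lieBracket, hX.fderiv, hR.fderiv]
  simp

/-- The derivative of a function on phase space along the ray `l ↦ (x, l • v)`. -/
lemma hasDerivAt_comp_ray {E F : Type*} [NormedAddCommGroup E] [NormedSpace ℝ E]
    [NormedAddCommGroup F] [NormedSpace ℝ F] {ψ : E × E → F} {x v : E} {l : ℝ}
    (hψ : DifferentiableAt ℝ ψ (x, l • v)) :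
    HasDerivAt (fun t : ℝ => ψ (x, t • v)) (fderiv ℝ ψ (x, l • v) (0, v)) l := by
  have hray : HasDerivAt (fun t : ℝ => (x, t • v)) ((0 : E), v) l := by
    simpa using (hasDerivAt_const l x).prodMk ((hasDerivAt_id l).smul_const v)
  exact hψ.hasFDerivAt.comp_hasDerivAt l hray

/-- The component of `ψ` orthogonal to the velocity, written through the exterior product
of the velocity with `ψ`. -/
noncomputable def velocityOrthogonalPart {n : ℕ}
    (ψ : (Fin n → ℝ) × (Fin n → ℝ) → (Fin n → ℝ)) (p : (Fin n → ℝ) × (Fin n → ℝ)) :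
    Fin n → ℝ :=
  fun j => (∑ i, p.2 i * (p.2 i * ψ p j - p.2 j * ψ p i)) / ∑ i, p.2 i ^ 2

lemma sum_sq_ne_zero {n : ℕ} {v : Fin n → ℝ} (hv : v ≠ 0) : ∑ i, v i ^ 2 ≠ 0 := by
  contrapose! hv
  rw [Finset.sum_eq_zero_iff_of_nonneg fun i _ => sq_nonneg (v i)] at hv
  exact funext fun i => pow_eq_zero_iff two_ne_zero |>.1 (hv i (Finset.mem_univ i))

lemma velocityOrthogonalPart_wedge {n : ℕ} (ψ : (Fin n → ℝ) × (Fin n → ℝ) → (Fin n → ℝ))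
    {p : (Fin n → ℝ) × (Fin n → ℝ)} (hp : p.2 ≠ 0) (i j : Fin n) :
    p.2 i * velocityOrthogonalPart ψ p j - p.2 j * velocityOrthogonalPart ψ p i =
      p.2 i * ψ p j - p.2 j * ψ p i := by
  have hs := sum_sq_ne_zero hp
  simp only [velocityOrthogonalPart, mul_div_assoc']
  rw [← sub_div, div_eq_iff hs, Finset.mul_sum, Finset.mul_sum, Finset.mul_sum,
    ← Finset.sum_sub_distrib]
  exact Finset.sum_congr rfl fun k _ => by ring

lemma differentiableOn_velocityOrthogonalPart {n : ℕ}
    {ψ : (Fin n → ℝ) × (Fin n → ℝ) → (Fin n → ℝ)} {U : Set ((Fin n → ℝ) × (Fin n → ℝ))}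
    (hU0 : ∀ p ∈ U, p.2 ≠ 0) (hψ : DifferentiableOn ℝ ψ U) :
    DifferentiableOn ℝ (velocityOrthogonalPart ψ) U := by
  have hψi := differentiableOn_pi.1 hψ
  have hv : ∀ i, DifferentiableOn ℝ (fun p : (Fin n → ℝ) × (Fin n → ℝ) => p.2 i) U :=
    differentiableOn_pi.1 differentiableOn_snd
  refine differentiableOn_pi.2 fun j => ?_
  simp only [velocityOrthogonalPart, div_eq_mul_inv]
  refine DifferentiableOn.mul ?_ (DifferentiableOn.inv ?_ fun p hp => sum_sq_ne_zero (hU0 p hp))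
  · exact DifferentiableOn.fun_sum fun i _ =>
      (hv i).mul (((hv i).mul (hψi j)).sub ((hv j).mul (hψi i)))
  · exact DifferentiableOn.fun_sum fun i _ => (hv i).pow 2

/-- Vlasov Bivector Theorem, (i) ⟺ (ii) in coordinates: the horizontal bivector `R∧X`
admits a Vlasov representation iff it is integrable
(`[R,X]` is pointwise a combination `a•R + b•X` on `U`). -/
theorem stmt_13 (n : ℕ) (hn : 1 ≤ n)
    (U : Set ((Fin n → ℝ) × (Fin n → ℝ))) (hU : IsOpen U)
    (hU0 : ∀ p ∈ U, p.2 ≠ 0)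
    (hUcone : ∀ p ∈ U, ∀ l : ℝ, 0 < l → (p.1, l • p.2) ∈ U)
    (ψ : (Fin n → ℝ) × (Fin n → ℝ) → (Fin n → ℝ))
    (hψ : DifferentiableOn ℝ ψ U)
    (X R : (Fin n → ℝ) × (Fin n → ℝ) → (Fin n → ℝ) × (Fin n → ℝ))
    (hX : X = fun p => (p.2, ψ p))
    (hR : R = fun p => (0, p.2)) :
    (∃ φ : (Fin n → ℝ) × (Fin n → ℝ) → (Fin n → ℝ),
        DifferentiableOn ℝ φ U ∧
        (∀ p ∈ U, ∀ l : ℝ, 0 < l → φ (p.1, l • p.2) = l ^ 2 • φ p) ∧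
        (∀ p ∈ U, ∀ i j : Fin n,
          p.2 i * φ p j - p.2 j * φ p i = p.2 i * ψ p j - p.2 j * ψ p i)) ↔
    (∃ a b : (Fin n → ℝ) × (Fin n → ℝ) → ℝ,
        ∀ p ∈ U, lieBracket ℝ R X p = a p • R p + b p • X p) := by
  subst hX hR
  have hd : ∀ p ∈ U, DifferentiableAt ℝ ψ p := fun p hp => hψ.differentiableAt (hU.mem_nhds hp)
  have hwedge : ∀ p ∈ U, ∀ i j : Fin n, ∀ l : ℝ, 0 < l →
      HasDerivAt (fun t : ℝ => p.2 i * ψ (p.1, t • p.2) j - p.2 j * ψ (p.1, t • p.2) i)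
        (p.2 i * fderiv ℝ ψ (p.1, l • p.2) (0, p.2) j
          - p.2 j * fderiv ℝ ψ (p.1, l • p.2) (0, p.2) i) l := by
    intro p hp i j l hl
    have h := hasDerivAt_pi.1 (hasDerivAt_comp_ray (hd _ (hUcone p hp l hl)))
    exact ((h j).const_mul _).sub ((h i).const_mul _)
  constructor
  · rintro ⟨φ, -, hφ, hw⟩
    have hparallel : ∀ p ∈ U, ∃ a : ℝ, fderiv ℝ ψ p (0, p.2) - (2 : ℝ) • ψ p = a • p.2 := by
      intro p hp
      refine exists_eq_smul_of_wedge_eq_zero (hU0 p hp) fun i j => ?_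
      have h1 := hwedge p hp i j 1 one_pos
      have h2 : HasDerivAt
          (fun t : ℝ => p.2 i * ψ (p.1, t • p.2) j - p.2 j * ψ (p.1, t • p.2) i)
          (2 * (p.2 i * ψ p j - p.2 j * ψ p i)) 1 := by
        have h3 := (hasDerivAt_pow 2 (1 : ℝ)).mul_const (p.2 i * ψ p j - p.2 j * ψ p i)
        refine (h3.congr_deriv (by norm_num)).congr_of_eventuallyEq ?_
        filter_upwards [lt_mem_nhds (one_pos : (0 : ℝ) < 1)] with t ht
        have h4 := hw _ (hUcone p hp t ht) i j
        rw [hφ p hp t ht] at h4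
        simp only [Pi.smul_apply, smul_eq_mul] at h4
        apply mul_left_cancel₀ ht.ne'
        linear_combination t ^ 3 * hw p hp i j - h4
      have h5 := h1.unique h2
      simp only [one_smul, Prod.mk.eta] at h5
      simp only [Pi.sub_apply, Pi.smul_apply, smul_eq_mul]
      linear_combination h5
    choose! a ha using hparallel
    refine ⟨a, fun _ => 1, fun p hp => ?_⟩
    rw [lieBracket_radial_horizontal (hd p hp)]
    refine Prod.ext (by simp) ?_
    simp only [Prod.snd_add, Prod.smul_snd, ← ha p hp]
    module
  · rintro ⟨a, b, hab⟩
    have heuler : ∀ p ∈ U, fderiv ℝ ψ p (0, p.2) = a p • p.2 + (2 : ℝ) • ψ p := by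
      intro p hp
      have h := hab p hp
      rw [lieBracket_radial_horizontal (hd p hp)] at h
      have h1 : p.2 = b p • p.2 := by simpa using congrArg Prod.fst h
      have h2 : fderiv ℝ ψ p (0, p.2) - ψ p = a p • p.2 + b p • ψ p := congrArg Prod.snd h
      have hb : b p = 1 := smul_left_injective ℝ (hU0 p hp) (by simpa using h1.symm)
      rw [sub_eq_iff_eq_add.1 h2, hb]
      module
    have hhom : ∀ p ∈ U, ∀ l : ℝ, 0 < l → ∀ i j : Fin n,
        p.2 i * ψ (p.1, l • p.2) j - p.2 j * ψ (p.1, l • p.2) i =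
          l ^ 2 * (p.2 i * ψ p j - p.2 j * ψ p i) := by
      intro p hp l hl i j
      have h := eq_pow_mul_of_euler 2 (hwedge p hp i j) (fun t ht => ?_) hl
      · simpa only [one_smul, Prod.mk.eta] using h
      have h1 := heuler _ (hUcone p hp t ht)
      have h2 : ((0 : Fin n → ℝ), t • p.2) = t • ((0 : Fin n → ℝ), p.2) := by simp
      simp only [h2, map_smul] at h1
      have hi := congrFun h1 i
      have hj := congrFun h1 j
      simp only [Pi.smul_apply, Pi.add_apply, smul_eq_mul] at hi hj
      push_cast
      linear_combination p.2 i * hj - p.2 j * hi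
    refine ⟨velocityOrthogonalPart ψ, differentiableOn_velocityOrthogonalPart hU0 hψ,
      fun p hp l hl => funext fun j => ?_,
      fun p hp => velocityOrthogonalPart_wedge ψ (hU0 p hp)⟩
    have hnum : ∑ i, (l • p.2) i * ((l • p.2) i * ψ (p.1, l • p.2) j
        - (l • p.2) j * ψ (p.1, l • p.2) i) =
        l ^ 4 * ∑ i, p.2 i * (p.2 i * ψ p j - p.2 j * ψ p i) := by
      rw [Finset.mul_sum]
      refine Finset.sum_congr rfl fun i _ => ?_
      simp only [Pi.smul_apply, smul_eq_mul]
      linear_combination l ^ 2 * p.2 i * hhom p hp l hl i j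
    have hden : ∑ i, (l • p.2) i ^ 2 = l ^ 2 * ∑ i, p.2 i ^ 2 := by
      simp only [Pi.smul_apply, smul_eq_mul, mul_pow, Finset.mul_sum]
    simp only [velocityOrthogonalPart, Pi.smul_apply (l ^ 2), smul_eq_mul (l ^ 2)]
    rw [hnum, hden, mul_div_mul_comm]
    congr 1
    field_simp
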